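/- Let ν ∈ ℝ with ν ≠ 3 and ν ≠ −1, and set α₁ = 2 − ν, α₂ = (ν−1)(7+ν)/(3−ν), α₃ = (1−ν)(3+ν)/(1+ν). For every t ∈ ℝ, the function s ↦ [ G^B_{n_x n_x n_y n_y n_y} + ν G^B_{τ_x τ_x n_y n_y n_y} + α₁ G^B_{n_x n_x n_y τ_y τ_y} + ν α₁ G^B_{τ_x τ_x n_y τ_y τ_y} + α₂ κ(t+s) G^B_{n_x n_x n_y n_y} + ν α₂ κ(t+s) G^B_{τ_x τ_x n_y n_y} + α₃ κ′(t+s) G^B_{n_x n_x τ_y} + ν α₃ κ′(t+s) G^B_{τ_x τ_x τ_y} ](γ(t), γ(t+s)), defined for small s ≠ 0, has a finite limit as s → 0; that is, the singularities of the individual terms (which blow up like 1/s² and 1/s) cancel in this combination. -/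

import Mathlib

open Real Filter Topology MeasureTheory

noncomputable section

/-- Euclidean dot product on `ℝ × ℝ`. -/
def dot2 (v w : ℝ × ℝ) : ℝ := v.1 * w.1 + v.2 * w.2

/-- Unit tangent vector `τ(s) = γ′(s)`. -/
def tang (γ : ℝ → ℝ × ℝ) (s : ℝ) : ℝ × ℝ := deriv γ s

/-- Unit normal vector `n(s) = (τ₂(s), −τ₁(s))`. -/
def nor (γ : ℝ → ℝ × ℝ) (s : ℝ) : ℝ × ℝ := ((deriv γ s).2, -(deriv γ s).1)

/-- Signed curvature `κ(s) = −γ″(s)·n(s)`. -/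
def curv (γ : ℝ → ℝ × ℝ) (s : ℝ) : ℝ := -(dot2 (deriv (deriv γ) s) (nor γ s))

/-- The biharmonic Green's function `G^B(x,y) = (1/(8π))‖x−y‖² log‖x−y‖`. -/
def GB (x y : ℝ × ℝ) : ℝ :=
  1 / (8 * π) * dot2 (x - y) (x - y) * Real.log (Real.sqrt (dot2 (x - y) (x - y)))

/-- Directional derivative in the first argument, in the direction `v`. -/
def ddx (v : ℝ × ℝ) (f : ℝ × ℝ → ℝ × ℝ → ℝ) (x y : ℝ × ℝ) : ℝ :=
  deriv (fun e : ℝ => f (x + e • v) y) 0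

/-- Directional derivative in the second argument, in the direction `v`. -/
def ddy (v : ℝ × ℝ) (f : ℝ × ℝ → ℝ × ℝ → ℝ) (x y : ℝ × ℝ) : ℝ :=
  deriv (fun e : ℝ => f x (y + e • v)) 0

/-- The supported-plate kernel
`K = G^B_{n_x n_x n_y n_y n_y} + ν G^B_{τ_x τ_x n_y n_y n_y} + α₁ G^B_{n_x n_x n_y τ_y τ_y}
 + ν α₁ G^B_{τ_x τ_x n_y τ_y τ_y} + α₂ κ(s) G^B_{n_x n_x n_y n_y} + ν α₂ κ(s) G^B_{τ_x τ_x n_y n_y}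
 + α₃ κ′(s) G^B_{n_x n_x τ_y} + ν α₃ κ′(s) G^B_{τ_x τ_x τ_y}`
evaluated at `(x, γ(s))`, with `x`-derivatives in the directions `n(t)`, `τ(t)` and
`y`-derivatives in the directions `n(s)`, `τ(s)`. -/
def suppKer (γ : ℝ → ℝ × ℝ) (ν α₁ α₂ α₃ : ℝ) (t : ℝ) (x : ℝ × ℝ) (s : ℝ) : ℝ :=
  ddx (nor γ t) (ddx (nor γ t) (ddy (nor γ s) (ddy (nor γ s) (ddy (nor γ s) GB)))) x (γ s)
    + ν * ddx (tang γ t) (ddx (tang γ t)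
        (ddy (nor γ s) (ddy (nor γ s) (ddy (nor γ s) GB)))) x (γ s)
    + α₁ * ddx (nor γ t) (ddx (nor γ t)
        (ddy (nor γ s) (ddy (tang γ s) (ddy (tang γ s) GB)))) x (γ s)
    + ν * α₁ * ddx (tang γ t) (ddx (tang γ t)
        (ddy (nor γ s) (ddy (tang γ s) (ddy (tang γ s) GB)))) x (γ s)
    + α₂ * curv γ s * ddx (nor γ t) (ddx (nor γ t)
        (ddy (nor γ s) (ddy (nor γ s) GB))) x (γ s)
    + ν * α₂ * curv γ s * ddx (tang γ t) (ddx (tang γ t)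
        (ddy (nor γ s) (ddy (nor γ s) GB))) x (γ s)
    + α₃ * deriv (curv γ) s * ddx (nor γ t) (ddx (nor γ t) (ddy (tang γ s) GB)) x (γ s)
    + ν * α₃ * deriv (curv γ) s * ddx (tang γ t) (ddx (tang γ t) (ddy (tang γ s) GB)) x (γ s)

/-- Identification of the plane with the complex numbers. -/
def toC (p : ℝ × ℝ) : ℂ := ⟨p.1, p.2⟩

lemma toC_re (p : ℝ × ℝ) : (toC p).re = p.1 := rfl
lemma toC_im (p : ℝ × ℝ) : (toC p).im = p.2 := rfl

lemma toC_sub_ne {x y : ℝ × ℝ} (h : x ≠ y) : toC (x - y) ≠ 0 := by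
  intro h0
  apply h
  have h1 := congrArg Complex.re h0
  have h2 := congrArg Complex.im h0
  simp [toC] at h1 h2
  ext <;> linarith

lemma ddx_of {f : ℝ × ℝ → ℝ × ℝ → ℝ} {φ φ' : ℂ → ℝ} {v : ℝ × ℝ}
    (hf : ∀ x y, x ≠ y → f x y = φ (toC (x - y)))
    (hφ : ∀ z, z ≠ 0 → HasDerivAt (fun e : ℝ => φ (z + e * toC v)) (φ' z) 0) :
    ∀ x y, x ≠ y → ddx v f x y = φ' (toC (x - y)) := by
  intro x y hxy
  unfold ddx
  have hev : (fun e : ℝ => f (x + e • v) y) =ᶠ[𝓝 0]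
      (fun e : ℝ => φ (toC (x - y) + e * toC v)) := by
    have hc : ContinuousAt (fun e : ℝ => x + e • v) 0 := by fun_prop
    have : ∀ᶠ e in 𝓝 (0 : ℝ), x + e • v ≠ y := by
      apply hc.eventually_ne
      simpa using hxy
    filter_upwards [this] with e he
    rw [hf _ _ he]
    congr 1
    apply Complex.ext <;> simp [toC] <;> ring
  rw [hev.deriv_eq]
  exact (hφ _ (toC_sub_ne hxy)).deriv

lemma ddy_of {f : ℝ × ℝ → ℝ × ℝ → ℝ} {φ φ' : ℂ → ℝ} {v : ℝ × ℝ}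
    (hf : ∀ x y, x ≠ y → f x y = φ (toC (x - y)))
    (hφ : ∀ z, z ≠ 0 → HasDerivAt (fun e : ℝ => φ (z + e * (-toC v))) (φ' z) 0) :
    ∀ x y, x ≠ y → ddy v f x y = φ' (toC (x - y)) := by
  intro x y hxy
  unfold ddy
  have hev : (fun e : ℝ => f x (y + e • v)) =ᶠ[𝓝 0]
      (fun e : ℝ => φ (toC (x - y) + e * (-toC v))) := by
    have hc : ContinuousAt (fun e : ℝ => y + e • v) 0 := by fun_prop
    have : ∀ᶠ e in 𝓝 (0 : ℝ), y + e • v ≠ x := by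
      apply hc.eventually_ne
      simpa using hxy.symm
    filter_upwards [this] with e he
    rw [hf _ _ he.symm]
    congr 1
    apply Complex.ext <;> simp [toC] <;> ring
  rw [hev.deriv_eq]
  exact (hφ _ (toC_sub_ne hxy)).deriv

/-- Green's function in terms of the complex difference. -/
def phi0 (z : ℂ) : ℝ := 1 / (8 * π) * (z.re ^ 2 + z.im ^ 2) * (Real.log (z.re ^ 2 + z.im ^ 2) / 2)

def phi1 (a z : ℂ) : ℝ :=
  1 / (8 * π) * ((z.re * a.re + z.im * a.im) * (Real.log (z.re ^ 2 + z.im ^ 2) + 1))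

def phi2 (a b z : ℂ) : ℝ :=
  1 / (8 * π) * ((a.re * b.re + a.im * b.im) * (Real.log (z.re ^ 2 + z.im ^ 2) + 1)
    + 2 * (z.re * a.re + z.im * a.im) * (z.re * b.re + z.im * b.im) / (z.re ^ 2 + z.im ^ 2))

local notation "cj" => starRingEnd ℂ

def C3 (a b c z : ℂ) : ℂ :=
  -(a * b * c) * cj z * (z⁻¹) ^ 2 + (cj a * b * c + a * cj b * c + a * b * cj c) * z⁻¹

def C4 (a b c d z : ℂ) : ℂ :=
  2 * (a * b * c * d) * cj z * (z⁻¹) ^ 3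
    - (cj a * b * c * d + a * cj b * c * d + a * b * cj c * d + a * b * c * cj d) * (z⁻¹) ^ 2

def C5 (a b c d e z : ℂ) : ℂ :=
  -6 * (a * b * c * d * e) * cj z * (z⁻¹) ^ 4
    + 2 * (cj a * b * c * d * e + a * cj b * c * d * e + a * b * cj c * d * e
      + a * b * c * cj d * e + a * b * c * d * cj e) * (z⁻¹) ^ 3

lemma GB_eq (x y : ℝ × ℝ) (_ : x ≠ y) : GB x y = phi0 (toC (x - y)) := by
  unfold GB phi0
  have h : dot2 (x - y) (x - y) = (toC (x - y)).re ^ 2 + (toC (x - y)).im ^ 2 := by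
    simp [dot2, toC]; ring
  rw [h, Real.log_sqrt (by positivity)]

lemma rho_pos {z : ℂ} (hz : z ≠ 0) : 0 < z.re ^ 2 + z.im ^ 2 := by
  have := Complex.normSq_pos.2 hz
  rw [Complex.normSq_apply] at this
  nlinarith

lemma hd_re (z a : ℂ) : HasDerivAt (fun e : ℝ => (z + e * a).re) a.re 0 := by
  have : (fun e : ℝ => (z + e * a).re) = fun e : ℝ => z.re + e * a.re := by
    funext e; simp
  rw [this]
  simpa using ((hasDerivAt_id (0 : ℝ)).mul_const a.re).const_add z.re

lemma hd_im (z a : ℂ) : HasDerivAt (fun e : ℝ => (z + e * a).im) a.im 0 := by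
  have : (fun e : ℝ => (z + e * a).im) = fun e : ℝ => z.im + e * a.im := by
    funext e; simp
  rw [this]
  simpa using ((hasDerivAt_id (0 : ℝ)).mul_const a.im).const_add z.im

lemma hd_rho (z a : ℂ) : HasDerivAt (fun e : ℝ => (z + e * a).re ^ 2 + (z + e * a).im ^ 2)
    (2 * (z.re * a.re + z.im * a.im)) 0 := by
  have := ((hd_re z a).pow 2).add ((hd_im z a).pow 2)
  refine this.congr_deriv ?_
  simp; ring

lemma hd_log {z : ℂ} (hz : z ≠ 0) (a : ℂ) :
    HasDerivAt (fun e : ℝ => Real.log ((z + e * a).re ^ 2 + (z + e * a).im ^ 2))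
    (2 * (z.re * a.re + z.im * a.im) / (z.re ^ 2 + z.im ^ 2)) 0 := by
  have h := (hd_rho z a).log (by simpa using (rho_pos hz).ne')
  refine h.congr_deriv ?_
  simp

lemma hd_dot (z a c : ℂ) : HasDerivAt
    (fun e : ℝ => (z + e * a).re * c.re + (z + e * a).im * c.im)
    (a.re * c.re + a.im * c.im) 0 :=
  ((hd_re z a).mul_const _).add ((hd_im z a).mul_const _)

lemma hd0 (a z : ℂ) (hz : z ≠ 0) :
    HasDerivAt (fun e : ℝ => phi0 (z + e * a)) (phi1 a z) 0 := by
  unfold phi0 phi1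
  have h := (((hd_rho z a).const_mul (1 / (8 * π))).mul ((hd_log hz a).div_const 2))
  refine h.congr_deriv ?_
  have := (rho_pos hz).ne'
  simp
  field_simp

lemma hd1 (a b z : ℂ) (hz : z ≠ 0) :
    HasDerivAt (fun e : ℝ => phi1 a (z + e * b)) (phi2 a b z) 0 := by
  unfold phi1 phi2
  have h := ((hd_dot z b a).mul ((hd_log hz b).add_const 1)).const_mul (1 / (8 * π))
  refine h.congr_deriv ?_
  have := (rho_pos hz).ne'
  simp
  field_simp

lemma C3_re (a b c z : ℂ) (hz : z ≠ 0) : (C3 a b c z).re =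
    (a.re * b.re + a.im * b.im) * (2 * (z.re * c.re + z.im * c.im) / (z.re ^ 2 + z.im ^ 2))
    + 2 * ((c.re * a.re + c.im * a.im) * (z.re * b.re + z.im * b.im) +
        (z.re * a.re + z.im * a.im) * (c.re * b.re + c.im * b.im)) / (z.re ^ 2 + z.im ^ 2)
    - 4 * (z.re * a.re + z.im * a.im) * (z.re * b.re + z.im * b.im) * (z.re * c.re + z.im * c.im)
      / (z.re ^ 2 + z.im ^ 2) ^ 2 := by
  have h := (rho_pos hz).ne'
  have hn : Complex.normSq z = z.re ^ 2 + z.im ^ 2 := by rw [Complex.normSq_apply]; ring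
  unfold C3
  simp only [pow_two (z⁻¹), Complex.add_re, Complex.mul_re, Complex.mul_im, Complex.neg_re, Complex.neg_im,
    Complex.add_im, Complex.conj_re, Complex.conj_im, Complex.inv_re, Complex.inv_im, hn]
  field_simp
  ring

lemma hd2 (a b c z : ℂ) (hz : z ≠ 0) :
    HasDerivAt (fun e : ℝ => phi2 a b (z + e * c)) (1 / (8 * π) * (C3 a b c z).re) 0 := by
  unfold phi2
  have hr := (rho_pos hz).ne'
  have h := ((((hd_log hz c).add_const 1).const_mul (a.re * b.re + a.im * b.im)).add
    ((((hd_dot z c a).const_mul 2).mul (hd_dot z c b)).div (hd_rho z c)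
      (by simpa using hr))).const_mul (1 / (8 * π))
  refine h.congr_deriv ?_
  rw [C3_re a b c z hz]
  simp
  field_simp
  ring

lemma hd_lin (z a : ℂ) : HasDerivAt (fun e : ℝ => z + e * a) a 0 := by
  simpa using ((Complex.ofRealCLM.hasDerivAt (x := (0:ℝ))).mul_const a).const_add z

lemma hd_conj (z a : ℂ) : HasDerivAt (fun e : ℝ => cj (z + e * a)) (cj a) 0 := by
  have : (fun e : ℝ => cj (z + e * a)) = fun e : ℝ => cj z + e * cj a := by
    funext e; simp
  rw [this]
  exact hd_lin _ _

lemma hd_inv {z : ℂ} (hz : z ≠ 0) (a : ℂ) :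
    HasDerivAt (fun e : ℝ => (z + e * a)⁻¹) (-a * (z⁻¹) ^ 2) 0 := by
  have h := (hd_lin z a).inv (by simpa using hz)
  refine h.congr_deriv ?_
  simp; field_simp

lemma hd_re_of {F : ℝ → ℂ} {F' : ℂ} (h : HasDerivAt F F' 0) :
    HasDerivAt (fun e => 1 / (8 * π) * (F e).re) (1 / (8 * π) * F'.re) 0 :=
  ((Complex.reCLM.hasFDerivAt.comp_hasDerivAt (0:ℝ) h)).const_mul _

lemma hd3 (a b c d z : ℂ) (hz : z ≠ 0) :
    HasDerivAt (fun e : ℝ => 1 / (8 * π) * (C3 a b c (z + e * d)).re)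
      (1 / (8 * π) * (C4 a b c d z).re) 0 := by
  apply hd_re_of
  unfold C3 C4
  have h := (((hd_conj z d).const_mul (-(a * b * c))).mul ((hd_inv hz d).pow 2)).add
    ((hd_inv hz d).const_mul (cj a * b * c + a * cj b * c + a * b * cj c))
  refine h.congr_deriv ?_
  simp
  ring

lemma hd4 (a b c d e z : ℂ) (hz : z ≠ 0) :
    HasDerivAt (fun u : ℝ => 1 / (8 * π) * (C4 a b c d (z + u * e)).re)
      (1 / (8 * π) * (C5 a b c d e z).re) 0 := by
  apply hd_re_of
  unfold C4 C5
  have h := (((hd_conj z e).const_mul (2 * (a * b * c * d))).mul ((hd_inv hz e).pow 3)).sub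
    (((hd_inv hz e).pow 2).const_mul
      (cj a * b * c * d + a * cj b * c * d + a * b * cj c * d + a * b * c * cj d))
  refine h.congr_deriv ?_
  simp
  ring

lemma K5 (a b c d : ℝ × ℝ) (x y : ℝ × ℝ) (h : x ≠ y) :
    ddx d (ddx d (ddy c (ddy b (ddy a GB)))) x y = 1 / (8 * π) *
      (C5 (-toC a) (-toC b) (-toC c) (toC d) (toC d) (toC (x - y))).re :=
  ddx_of (ddx_of (ddy_of (ddy_of (ddy_of GB_eq (hd0 _)) (hd1 _ _)) (hd2 _ _ _)) (hd3 _ _ _ _))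
    (hd4 _ _ _ _ _) x y h

lemma K4 (a b d : ℝ × ℝ) (x y : ℝ × ℝ) (h : x ≠ y) :
    ddx d (ddx d (ddy b (ddy a GB))) x y = 1 / (8 * π) *
      (C4 (-toC a) (-toC b) (toC d) (toC d) (toC (x - y))).re :=
  ddx_of (ddx_of (ddy_of (ddy_of GB_eq (hd0 _)) (hd1 _ _)) (hd2 _ _ _)) (hd3 _ _ _ _) x y h

lemma K3 (a d : ℝ × ℝ) (x y : ℝ × ℝ) (h : x ≠ y) :
    ddx d (ddx d (ddy a GB)) x y = 1 / (8 * π) *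
      (C3 (-toC a) (toC d) (toC d) (toC (x - y))).re :=
  ddx_of (ddx_of (ddy_of GB_eq (hd0 _)) (hd1 _ _)) (hd2 _ _ _) x y h

/-- `X s = a0 + a1 s + a2 s² + r(s) s³` near `0`, with `r` having a limit at `0`. -/
def HasJet (X : ℝ → ℂ) (a0 a1 a2 : ℂ) : Prop :=
  ∃ r : ℝ → ℂ, (∃ c, Tendsto r (𝓝[≠] (0 : ℝ)) (𝓝 c)) ∧
    ∀ᶠ s : ℝ in 𝓝[≠] (0 : ℝ), X s = a0 + a1 * s + a2 * s ^ 2 + r s * s ^ 3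

lemma tendsto_s : Tendsto (fun s : ℝ => (s : ℂ)) (𝓝[≠] (0 : ℝ)) (𝓝 0) := by
  have : Tendsto (fun s : ℝ => (s : ℂ)) (𝓝 (0 : ℝ)) (𝓝 ((0 : ℝ) : ℂ)) :=
    Complex.continuous_ofReal.tendsto 0
  simpa using this.mono_left nhdsWithin_le_nhds

lemma HasJet.tendsto {X : ℝ → ℂ} {a0 a1 a2 : ℂ} (h : HasJet X a0 a1 a2) :
    Tendsto X (𝓝[≠] (0 : ℝ)) (𝓝 a0) := by
  obtain ⟨r, ⟨c, hc⟩, he⟩ := h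
  have h1 := ((tendsto_const_nhds (x := a0)).add (tendsto_s.const_mul a1)).add
    ((tendsto_s.pow 2).const_mul a2) |>.add (hc.mul (tendsto_s.pow 3))
  refine Tendsto.congr' ?_ (by simpa using h1)
  filter_upwards [he] with s hs using hs.symm

lemma HasJet.mul {X Y : ℝ → ℂ} {a0 a1 a2 b0 b1 b2 : ℂ} (h : HasJet X a0 a1 a2)
    (h' : HasJet Y b0 b1 b2) : HasJet (fun s => X s * Y s) (a0 * b0) (a0 * b1 + a1 * b0)
      (a0 * b2 + a1 * b1 + a2 * b0) := by
  have hY := h'.tendsto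
  obtain ⟨r, ⟨c, hc⟩, he⟩ := h
  obtain ⟨r', ⟨c', hc'⟩, he'⟩ := h'
  refine ⟨fun s => r s * Y s + (a0 + a1 * s + a2 * s ^ 2) * r' s + (a1 * b2 + a2 * b1)
    + a2 * b2 * s, ⟨_, ((hc.mul hY).add ((((tendsto_const_nhds (x := a0)).add
    (tendsto_s.const_mul a1)).add
    ((tendsto_s.pow 2).const_mul a2)).mul hc') |>.add tendsto_const_nhds).add
    (tendsto_s.const_mul _)⟩, ?_⟩
  filter_upwards [he, he'] with s hs hs'
  rw [hs]
  linear_combination (a0 + a1 * s + a2 * s ^ 2) * hs'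

lemma HasJet.add {X Y : ℝ → ℂ} {a0 a1 a2 b0 b1 b2 : ℂ} (h : HasJet X a0 a1 a2)
    (h' : HasJet Y b0 b1 b2) : HasJet (fun s => X s + Y s) (a0 + b0) (a1 + b1) (a2 + b2) := by
  obtain ⟨r, ⟨c, hc⟩, he⟩ := h
  obtain ⟨r', ⟨c', hc'⟩, he'⟩ := h'
  refine ⟨fun s => r s + r' s, ⟨_, hc.add hc'⟩, ?_⟩
  filter_upwards [he, he'] with s hs hs'
  rw [hs, hs']; ring

lemma HasJet.conj {X : ℝ → ℂ} {a0 a1 a2 : ℂ} (h : HasJet X a0 a1 a2) :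
    HasJet (fun s => cj (X s)) (cj a0) (cj a1) (cj a2) := by
  obtain ⟨r, ⟨c, hc⟩, he⟩ := h
  refine ⟨fun s => cj (r s), ⟨_, (Complex.continuous_conj.tendsto c).comp hc⟩, ?_⟩
  filter_upwards [he] with s hs
  rw [hs]; simp

lemma HasJet.const (a : ℂ) : HasJet (fun _ => a) a 0 0 :=
  ⟨fun _ => 0, ⟨0, tendsto_const_nhds⟩, by simp⟩

lemma HasJet.var : HasJet (fun s : ℝ => (s : ℂ)) 0 1 0 :=
  ⟨fun _ => 0, ⟨0, tendsto_const_nhds⟩, by simp⟩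

lemma HasJet.const_mul {X : ℝ → ℂ} {a0 a1 a2 : ℂ} (k : ℂ) (h : HasJet X a0 a1 a2) :
    HasJet (fun s => k * X s) (k * a0) (k * a1) (k * a2) := by
  have := (HasJet.const k).mul h
  simpa using this

lemma HasJet.congr {X Y : ℝ → ℂ} {a0 a1 a2 b0 b1 b2 : ℂ} (h : HasJet X a0 a1 a2)
    (hXY : ∀ s, X s = Y s) (h0 : a0 = b0) (h1 : a1 = b1) (h2 : a2 = b2) : HasJet Y b0 b1 b2 := by
  subst h0 h1 h2
  have : X = Y := funext hXY
  rwa [← this]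

lemma HasJet.inv {X : ℝ → ℂ} {a1 a2 : ℂ} (h : HasJet X 1 a1 a2) :
    HasJet (fun s => (X s)⁻¹) 1 (-a1) (a1 ^ 2 - a2) := by
  have hX := h.tendsto
  have hne : ∀ᶠ s in 𝓝[≠] (0 : ℝ), X s ≠ 0 := hX.eventually_ne one_ne_zero
  have hXi := hX.inv₀ one_ne_zero
  have h1 : HasJet (fun s : ℝ => 1 + (-a1) * (s : ℂ) + (a1 ^ 2 - a2) * ((s : ℂ) * s))
      1 (-a1) (a1 ^ 2 - a2) :=
    (((HasJet.const 1).add (HasJet.var.const_mul (-a1))).add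
      ((HasJet.var.mul HasJet.var).const_mul (a1 ^ 2 - a2))).congr (fun _ => rfl)
      (by ring) (by ring) (by ring)
  obtain ⟨r, ⟨c, hc⟩, he⟩ := h.mul h1
  refine ⟨fun s => -(r s * (X s)⁻¹), ⟨_, (hc.mul hXi).neg⟩, ?_⟩
  filter_upwards [he, hne] with s hs hs'
  have := mul_inv_cancel₀ hs'
  linear_combination (-(X s)⁻¹) * hs + (1 + (-a1) * (s : ℂ) + (a1 ^ 2 - a2) * ((s : ℂ) * s)) * this

lemma iter_eq (f : ℝ → ℂ) (k : ℕ) :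
    iteratedDerivWithin k f Set.univ 0 = iteratedDeriv k f 0 := by
  rw [iteratedDerivWithin_univ]

lemma HasJet.of_smooth {f : ℝ → ℂ} (hf : ContDiff ℝ (⊤ : ℕ∞) f) :
    HasJet f (f 0) (deriv f 0) (deriv (deriv f) 0 / 2) := by
  have h := taylor_tendsto (n := 3) convex_univ (Set.mem_univ (0 : ℝ))
    (contDiff_infty.1 hf _).contDiffOn
  rw [nhdsWithin_univ] at h
  have h' := (h.mono_left (nhdsWithin_le_nhds (s := {0}ᶜ))).add
    (tendsto_const_nhds (x := iteratedDeriv 3 f 0 / 6))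
  refine ⟨_, ⟨_, h'⟩, ?_⟩
  filter_upwards [self_mem_nhdsWithin] with s hs
  have hs : (s : ℂ) ≠ 0 := by exact_mod_cast hs
  simp only [taylor_within_apply, Finset.sum_range_succ, Finset.sum_range_zero,
    iteratedDerivWithin_univ, iteratedDeriv_zero, Complex.real_smul]
  rw [iteratedDeriv_one, iteratedDeriv_succ (n := 1), iteratedDeriv_one]
  simp [Nat.factorial]
  field_simp
  ring

lemma HasJet.of_smooth_div {f : ℝ → ℂ} (hf : ContDiff ℝ (⊤ : ℕ∞) f) :
    HasJet (fun s => (f s - f 0) / s) (deriv f 0) (deriv (deriv f) 0 / 2)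
      (deriv (deriv (deriv f)) 0 / 6) := by
  have h := taylor_tendsto (n := 4) convex_univ (Set.mem_univ (0 : ℝ))
    (contDiff_infty.1 hf _).contDiffOn
  rw [nhdsWithin_univ] at h
  have h' := (h.mono_left (nhdsWithin_le_nhds (s := {0}ᶜ))).add
    (tendsto_const_nhds (x := iteratedDeriv 4 f 0 / 24))
  refine ⟨_, ⟨_, h'⟩, ?_⟩
  filter_upwards [self_mem_nhdsWithin] with s hs
  have hs : (s : ℂ) ≠ 0 := by exact_mod_cast hs
  simp only [taylor_within_apply, Finset.sum_range_succ, Finset.sum_range_zero,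
    iteratedDerivWithin_univ, iteratedDeriv_zero, Complex.real_smul]
  rw [iteratedDeriv_succ (n := 2), iteratedDeriv_one, iteratedDeriv_succ (n := 1), iteratedDeriv_one]
  simp [Nat.factorial]
  field_simp
  ring

/-- The reduced kernel `s³ K`, for a curve in the frame at `t`. -/
def Jred (ν α₂ α₃ : ℂ) (s E Q κ κ' : ℂ) : ℂ :=
  -6 * Complex.I * (1 - ν) ^ 2 * (E ^ 3 * cj Q * Q⁻¹ ^ 4)
    + -2 * Complex.I * (1 - ν) * (2 * (1 + ν) * (E ^ 3 * Q⁻¹ ^ 3) - (5 - ν) * (E * Q⁻¹ ^ 3))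
    + α₂ * κ * s * (2 * (1 - ν) * (E ^ 2 * cj Q * Q⁻¹ ^ 3)
      + (2 * (1 - ν) * Q⁻¹ ^ 2 + 2 * (1 + ν) * (E ^ 2 * Q⁻¹ ^ 2)))
    + α₃ * κ' * s ^ 2 * ((1 - ν) * (E * cj Q * Q⁻¹ ^ 2)
      + (2 * (1 + ν) * (E * Q⁻¹) - (1 - ν) * (cj E * Q⁻¹)))

lemma Jred_jet (ν α₂ α₃ k k1 : ℝ) (a b c : ℂ) (hα₂ : (3 - ν) * α₂ = (ν - 1) * (7 + ν))
    (hα₃ : (1 + ν) * α₃ = (1 - ν) * (3 + ν)) {E Q κ κ' : ℝ → ℂ}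
    (hE : HasJet E 1 (Complex.I * k) ((Complex.I * k1 - k ^ 2) / 2))
    (hQ : HasJet Q 1 (Complex.I * k / 2) ((Complex.I * k1 - k ^ 2) / 6))
    (hκ : HasJet κ k k1 a) (hκ' : HasJet κ' k1 b c) :
    HasJet (fun s => Jred ν α₂ α₃ s (E s) (Q s) (κ s) (κ' s)) 0 0
      (Complex.I * ((4 * (1 - ν ^ 2) * k ^ 2 + 4 * ν * α₂ * k ^ 2 : ℝ) : ℂ)) := by
  have hI := Complex.I_sq
  have hα₂ : (3 - (ν : ℂ)) * α₂ = (ν - 1) * (7 + ν) := by exact_mod_cast hα₂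
  have hα₃ : (1 + (ν : ℂ)) * α₃ = (1 - ν) * (3 + ν) := by exact_mod_cast hα₃
  have hQi := hQ.inv
  have c2 : cj 2 = 2 := Complex.conj_ofNat 2
  have c6 : cj 6 = 6 := Complex.conj_ofNat 6
  have hQb : HasJet (fun s => cj (Q s)) 1 (-Complex.I * k / 2) ((-Complex.I * k1 - k ^ 2) / 6) :=
    hQ.conj.congr (fun _ => rfl) (by simp) (by simp [c2]) (by simp [c2, c6])
  have hEb : HasJet (fun s => cj (E s)) 1 (-Complex.I * k) ((-Complex.I * k1 - k ^ 2) / 2) :=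
    hE.conj.congr (fun _ => rfl) (by simp) (by simp [c2]) (by simp [c2, c6])
  have hEQ : HasJet (fun s => E s * (Q s)⁻¹) 1 (Complex.I * k / 2)
      (Complex.I * k1 / 3 - k ^ 2 / 12) :=
    (hE.mul hQi).congr (fun _ => rfl) (by ring) (by ring) (by grind)
  have hQi2 : HasJet (fun s => (Q s)⁻¹ ^ 2) 1 (-Complex.I * k)
      (-Complex.I * k1 / 3 - 5 * k ^ 2 / 12) :=
    (hQi.mul hQi).congr (fun _ => by ring) (by ring) (by ring) (by grind)
  have hEQ2 : HasJet (fun s => E s ^ 2 * (Q s)⁻¹ ^ 2) 1 (Complex.I * k)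
      (2 * Complex.I * k1 / 3 - 5 * k ^ 2 / 12) :=
    (hEQ.mul hEQ).congr (fun _ => by ring) (by ring) (by ring) (by grind)
  have h33 : HasJet (fun s => E s ^ 3 * (Q s)⁻¹ ^ 3) 1 (3 * Complex.I * k / 2)
      (Complex.I * k1 - k ^ 2) :=
    (hEQ2.mul hEQ).congr (fun _ => by ring) (by ring) (by ring) (by grind)
  have h13 : HasJet (fun s => E s * (Q s)⁻¹ ^ 3) 1 (-Complex.I * k / 2) 0 :=
    (hEQ.mul hQi2).congr (fun _ => by ring) (by ring) (by ring) (by grind)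
  have h314 : HasJet (fun s => E s ^ 3 * cj (Q s) * (Q s)⁻¹ ^ 4) 1 (Complex.I * k / 2)
      (2 / 3 * Complex.I * k1) :=
    (h33.mul (hQb.mul hQi)).congr (fun _ => by ring) (by ring) (by ring) (by grind)
  have h213 : HasJet (fun s => E s ^ 2 * cj (Q s) * (Q s)⁻¹ ^ 3) 1 0 _ :=
    (hEQ2.mul (hQb.mul hQi)).congr (fun _ => by ring) (by ring) (by ring) rfl
  have h112 : HasJet (fun s => E s * cj (Q s) * (Q s)⁻¹ ^ 2) 1 _ _ :=
    (hEQ.mul (hQb.mul hQi)).congr (fun _ => by ring) (by ring) rfl rfl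
  have hEbQ : HasJet (fun s => cj (E s) * (Q s)⁻¹) 1 _ _ :=
    (hEb.mul hQi).congr (fun _ => by ring) (by ring) rfl rfl
  have p1 := h314.const_mul (-6 * Complex.I * (1 - ν) ^ 2)
  have p2 := ((h33.const_mul (2 * (1 + (ν : ℂ)))).add
    (h13.const_mul (-(5 - (ν : ℂ))))).const_mul (-2 * Complex.I * (1 - ν))
  have p3 := ((hκ.mul HasJet.var).mul ((h213.const_mul (2 * (1 - (ν : ℂ)))).add
    ((hQi2.const_mul (2 * (1 - (ν : ℂ)))).add (hEQ2.const_mul (2 * (1 + (ν : ℂ))))))).const_mul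
      (α₂ : ℂ)
  have p4 := ((hκ'.mul (HasJet.var.mul HasJet.var)).mul ((h112.const_mul (1 - (ν : ℂ))).add
    ((hEQ.const_mul (2 * (1 + (ν : ℂ)))).add (hEbQ.const_mul (-(1 - (ν : ℂ))))))).const_mul
      (α₃ : ℂ)
  refine (((p1.add p2).add p3).add p4).congr (fun s => by unfold Jred; ring) ?_ ?_ ?_
  · ring
  · linear_combination (-(1 - ν) * k * (14 + 2 * ν) : ℂ) * hI + 2 * (k : ℂ) * hα₂
  · push_cast
    linear_combination (-8 * (1 - ν) * k1 : ℂ) * hI + 2 * (k1 : ℂ) * hα₂ + 2 * (k1 : ℂ) * hα₃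

lemma C5_rot {T : ℂ} (hT : T * cj T = 1) (a b c d e z : ℂ) :
    C5 (T * a) (T * b) (T * c) (T * d) (T * e) (T * z) = C5 a b c d e z := by
  have h0 : T ≠ 0 := left_ne_zero_of_mul_eq_one hT
  have h1 : cj T = T⁻¹ := eq_inv_of_mul_eq_one_right hT
  unfold C5
  simp only [map_mul, mul_inv, h1]
  field_simp

lemma C4_rot {T : ℂ} (hT : T * cj T = 1) (a b c d z : ℂ) :
    C4 (T * a) (T * b) (T * c) (T * d) (T * z) = C4 a b c d z := by
  have h0 : T ≠ 0 := left_ne_zero_of_mul_eq_one hT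
  have h1 : cj T = T⁻¹ := eq_inv_of_mul_eq_one_right hT
  unfold C4
  simp only [map_mul, mul_inv, h1]
  field_simp

lemma C3_rot {T : ℂ} (hT : T * cj T = 1) (a b c z : ℂ) :
    C3 (T * a) (T * b) (T * c) (T * z) = C3 a b c z := by
  have h0 : T ≠ 0 := left_ne_zero_of_mul_eq_one hT
  have h1 : cj T = T⁻¹ := eq_inv_of_mul_eq_one_right hT
  unfold C3
  simp only [map_mul, mul_inv, h1]
  field_simp

lemma red5a {E : ℂ} (hE : E * cj E = 1) (z : ℂ) (d : ℂ) :
    C5 (Complex.I * E) (Complex.I * E) (Complex.I * E) d d z =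
      6 * Complex.I * E ^ 3 * d ^ 2 * cj z * z⁻¹ ^ 4
      + 2 * (3 * Complex.I * E * d ^ 2 - 2 * Complex.I * E ^ 3 * d * cj d) * z⁻¹ ^ 3 := by
  have hI := Complex.I_sq
  unfold C5
  simp only [map_mul, Complex.conj_I]
  generalize cj E = F at *
  generalize cj z = zb at *
  generalize cj d = db at *
  generalize z⁻¹ = w at *
  generalize Complex.I = i at *
  grind

lemma red5b {E : ℂ} (hE : E * cj E = 1) (z : ℂ) (d : ℂ) :
    C5 (-E) (-E) (Complex.I * E) d d z =
      -6 * Complex.I * E ^ 3 * d ^ 2 * cj z * z⁻¹ ^ 4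
      + 2 * (Complex.I * E * d ^ 2 + 2 * Complex.I * E ^ 3 * d * cj d) * z⁻¹ ^ 3 := by
  have hI := Complex.I_sq
  unfold C5
  simp only [map_mul, map_neg, Complex.conj_I]
  generalize cj E = F at *
  generalize cj z = zb at *
  generalize cj d = db at *
  generalize z⁻¹ = w at *
  generalize Complex.I = i at *
  grind

lemma red4 {E : ℂ} (hE : E * cj E = 1) (z : ℂ) (d : ℂ) :
    C4 (Complex.I * E) (Complex.I * E) d d z =
      -2 * E ^ 2 * d ^ 2 * cj z * z⁻¹ ^ 3
      - (2 * d ^ 2 - 2 * E ^ 2 * d * cj d) * z⁻¹ ^ 2 := by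
  have hI := Complex.I_sq
  unfold C4
  simp only [map_mul, Complex.conj_I]
  generalize cj E = F at *
  generalize cj z = zb at *
  generalize cj d = db at *
  generalize z⁻¹ = w at *
  generalize Complex.I = i at *
  grind

lemma red_all {E Q : ℂ} (hE : E * cj E = 1) (ν α₂ α₃ κ κ' : ℂ) (s : ℝ) (hs : s ≠ 0)
    (hQ : Q ≠ 0) :
    C5 (Complex.I * E) (Complex.I * E) (Complex.I * E) (-Complex.I) (-Complex.I) (-(s * Q))
    + ν * C5 (Complex.I * E) (Complex.I * E) (Complex.I * E) 1 1 (-(s * Q))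
    + (2 - ν) * C5 (-E) (-E) (Complex.I * E) (-Complex.I) (-Complex.I) (-(s * Q))
    + ν * (2 - ν) * C5 (-E) (-E) (Complex.I * E) 1 1 (-(s * Q))
    + α₂ * κ * C4 (Complex.I * E) (Complex.I * E) (-Complex.I) (-Complex.I) (-(s * Q))
    + ν * α₂ * κ * C4 (Complex.I * E) (Complex.I * E) 1 1 (-(s * Q))
    + α₃ * κ' * C3 (-E) (-Complex.I) (-Complex.I) (-(s * Q))
    + ν * α₃ * κ' * C3 (-E) 1 1 (-(s * Q)) = Jred ν α₂ α₃ s E Q κ κ' * ((s : ℂ) ^ 3)⁻¹ := by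
  have hs' : (s : ℂ) ≠ 0 := by exact_mod_cast hs
  have hI := Complex.I_sq
  have hzb : cj (-(s * Q)) = -(s * cj Q) := by simp
  have hzi : (-((s : ℂ) * Q))⁻¹ = -((s : ℂ)⁻¹ * Q⁻¹) := by rw [inv_neg, mul_inv]
  simp only [red5a hE, red5b hE, red4 hE]
  unfold Jred C3
  simp only [hzb, hzi, map_neg, Complex.conj_I, map_one, neg_sq, hI]
  have hss := mul_inv_cancel₀ hs'
  rw [← inv_pow]
  generalize (s : ℂ)⁻¹ = w at *
  generalize Q⁻¹ = q at *
  generalize cj Q = Qb at *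
  generalize cj E = F at *
  generalize (s : ℂ) = x at *
  generalize Complex.I = i at *
  have e1 : w ^ 2 = x * w ^ 3 := by linear_combination (-w ^ 2) * hss
  have e2 : w = x ^ 2 * w ^ 3 := by linear_combination (-w - x * w ^ 2) * hss
  grind

/-- `toC` is a continuous linear map. -/
def toCL : ℝ × ℝ →L[ℝ] ℂ := (Complex.equivRealProdCLM.symm : ℝ × ℝ →L[ℝ] ℂ)

lemma toCL_apply (p : ℝ × ℝ) : toCL p = toC p := by
  apply Complex.ext <;> simp [toCL, toC]

lemma smooth_deriv {F : Type*} [NormedAddCommGroup F] [NormedSpace ℝ F] {f : ℝ → F}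
    (hf : ContDiff ℝ (⊤ : ℕ∞) f) : ContDiff ℝ (⊤ : ℕ∞) (deriv f) :=
  (contDiff_infty_iff_deriv.1 hf).2

lemma smooth_hasDeriv {F : Type*} [NormedAddCommGroup F] [NormedSpace ℝ F] {f : ℝ → F}
    (hf : ContDiff ℝ (⊤ : ℕ∞) f) (s : ℝ) : HasDerivAt f (deriv f s) s :=
  ((contDiff_infty_iff_deriv.1 hf).1 s).hasDerivAt

lemma toC_hasDeriv {f : ℝ → ℝ × ℝ} (hf : ContDiff ℝ (⊤ : ℕ∞) f) (t s : ℝ) :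
    HasDerivAt (fun s => toC (f (t + s))) (toC (deriv f (t + s))) s := by
  have h1 : HasDerivAt (fun s => f (t + s)) (deriv f (t + s)) s :=
    (smooth_hasDeriv hf (t + s)).comp_const_add t s
  have := toCL.hasFDerivAt.comp_hasDerivAt s h1
  simpa [Function.comp_def, toCL_apply] using this

lemma toC_smooth {f : ℝ → ℝ × ℝ} (hf : ContDiff ℝ (⊤ : ℕ∞) f) (t : ℝ) :
    ContDiff ℝ (⊤ : ℕ∞) (fun s => toC (f (t + s))) := by
  have : ContDiff ℝ (⊤ : ℕ∞) (fun s => toCL (f (t + s))) :=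
    toCL.contDiff.comp (hf.comp (contDiff_const.add contDiff_id))
  simpa [toCL_apply] using this

lemma curv_smooth {γ : ℝ → ℝ × ℝ} (hγ : ContDiff ℝ (⊤ : ℕ∞) γ) :
    ContDiff ℝ (⊤ : ℕ∞) (curv γ) := by
  have h1 := smooth_deriv hγ
  have h2 := smooth_deriv h1
  unfold curv dot2 nor
  exact ((h2.fst.mul h1.snd).add (h2.snd.mul h1.fst.neg)).neg

lemma frenet {γ : ℝ → ℝ × ℝ} (hγ : ContDiff ℝ (⊤ : ℕ∞) γ)
    (harc : ∀ s, dot2 (deriv γ s) (deriv γ s) = 1) (s : ℝ) :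
    toC (deriv (deriv γ) s) = Complex.I * (curv γ s : ℂ) * toC (deriv γ s) := by
  have h1 := smooth_hasDeriv (smooth_deriv hγ) s
  have hf : HasDerivAt (fun x => (deriv γ x).1) (deriv (deriv γ) s).1 s :=
    (ContinuousLinearMap.fst ℝ ℝ ℝ).hasFDerivAt.comp_hasDerivAt s h1
  have hs : HasDerivAt (fun x => (deriv γ x).2) (deriv (deriv γ) s).2 s :=
    (ContinuousLinearMap.snd ℝ ℝ ℝ).hasFDerivAt.comp_hasDerivAt s h1
  have hd := (hf.mul hf).add (hs.mul hs)
  have hc : HasDerivAt (fun s => dot2 (deriv γ s) (deriv γ s)) 0 s := by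
    simp only [harc]; exact hasDerivAt_const s 1
  have h0 := hd.unique hc
  have ha := harc s
  simp only [dot2] at ha
  apply Complex.ext
  · simp [toC, curv, dot2, nor]
    grind
  · simp [toC, curv, dot2, nor]
    grind

lemma real_smooth {f : ℝ → ℝ} (hf : ContDiff ℝ (⊤ : ℕ∞) f) (t : ℝ) :
    ContDiff ℝ (⊤ : ℕ∞) (fun s => (f (t + s) : ℂ)) :=
  Complex.ofRealCLM.contDiff.comp (hf.comp (contDiff_const.add contDiff_id))

lemma real_hasDeriv {f : ℝ → ℝ} (hf : ContDiff ℝ (⊤ : ℕ∞) f) (t s : ℝ) :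
    HasDerivAt (fun s => (f (t + s) : ℂ)) ((deriv f (t + s) : ℝ) : ℂ) s :=
  ((smooth_hasDeriv hf (t + s)).comp_const_add t s).ofReal_comp

lemma toC_norm {v : ℝ × ℝ} (h : dot2 v v = 1) : toC v * cj (toC v) = 1 := by
  rw [Complex.mul_conj, Complex.normSq_apply]
  simp only [dot2] at h
  simp [toC, h]

theorem stmt5 (L : ℝ) (hL : 0 < L) (γ : ℝ → ℝ × ℝ)
    (hγ : ContDiff ℝ (⊤ : ℕ∞) γ)
    (hper : ∀ s, γ (s + L) = γ s)
    (hinj : Set.InjOn γ (Set.Ico 0 L))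
    (harc : ∀ s, dot2 (deriv γ s) (deriv γ s) = 1)
    (ν : ℝ) (hν3 : ν ≠ 3) (hν1 : ν ≠ -1)
    (α₁ α₂ α₃ : ℝ) (hα₁ : α₁ = 2 - ν)
    (hα₂ : α₂ = (ν - 1) * (7 + ν) / (3 - ν))
    (hα₃ : α₃ = (1 - ν) * (3 + ν) / (1 + ν))
    (t : ℝ) :
    ∃ c : ℝ,
      Tendsto (fun s : ℝ => suppKer γ ν α₁ α₂ α₃ t (γ t) (t + s)) (𝓝[≠] (0 : ℝ))
        (𝓝 c) := by
  have hd1 := smooth_deriv hγ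
  have hκs := curv_smooth hγ
  set T : ℂ := toC (deriv γ t) with hTdef
  have hT : T * cj T = 1 := toC_norm (harc t)
  have hT' : cj T * T = 1 := by rw [mul_comm]; exact hT
  set k : ℝ := curv γ t with hk
  set k1 : ℝ := deriv (curv γ) t with hk1
  -- derivatives of the complex curve
  have dg : deriv (fun s => toC (γ (t + s))) = fun s => toC (deriv γ (t + s)) :=
    funext fun s => (toC_hasDeriv hγ t s).deriv
  have ddg : deriv (fun s => toC (deriv γ (t + s))) =
      fun s => Complex.I * (curv γ (t + s) : ℂ) * toC (deriv γ (t + s)) :=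
    funext fun s => by rw [(toC_hasDeriv hd1 t s).deriv, frenet hγ harc]
  have dddg : deriv (fun s => Complex.I * (curv γ (t + s) : ℂ) * toC (deriv γ (t + s))) 0 =
      (Complex.I * k1 - k ^ 2) * T := by
    have h := (((real_hasDeriv hκs t 0).const_mul Complex.I).mul (toC_hasDeriv hd1 t 0)).deriv
    refine (Eq.trans h ?_)
    rw [frenet hγ harc]
    simp only [add_zero, ← hk, ← hk1, ← hTdef]
    linear_combination (k : ℂ) ^ 2 * T * Complex.I_sq
  let E : ℝ → ℂ := fun s => cj T * toC (deriv γ (t + s))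
  let Q : ℝ → ℂ := fun s => cj T * ((toC (γ (t + s)) - toC (γ t)) / s)
  have hE : HasJet E 1 (Complex.I * k) ((Complex.I * k1 - k ^ 2) / 2) := by
    have h := (HasJet.of_smooth (toC_smooth hd1 t)).const_mul (cj T)
    rw [ddg, dddg] at h
    simp only [add_zero, ← hk, ← hTdef] at h
    exact h.congr (fun _ => rfl) hT' (by linear_combination Complex.I * k * hT')
      (by linear_combination ((Complex.I * k1 - k ^ 2) / 2) * hT')
  have hQ : HasJet Q 1 (Complex.I * k / 2) ((Complex.I * k1 - k ^ 2) / 6) := by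
    have h := (HasJet.of_smooth_div (toC_smooth hγ t)).const_mul (cj T)
    rw [dg, ddg, dddg] at h
    simp only [add_zero, ← hk, ← hTdef] at h
    exact h.congr (fun _ => rfl) hT' (by linear_combination Complex.I * k / 2 * hT')
      (by linear_combination ((Complex.I * k1 - k ^ 2) / 6) * hT')
  have hκ := HasJet.of_smooth (real_smooth hκs t)
  have hκ' := HasJet.of_smooth (real_smooth (smooth_deriv hκs) t)
  rw [(real_hasDeriv hκs t 0).deriv] at hκ
  simp only [add_zero, ← hk, ← hk1] at hκ hκ'
  have h3 : 3 - ν ≠ 0 := fun h => hν3 (by linarith)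
  have h1 : 1 + ν ≠ 0 := fun h => hν1 (by linarith)
  have hJ := Jred_jet ν α₂ α₃ k k1 _ _ _ (by rw [hα₂]; field_simp) (by rw [hα₃]; field_simp)
    hE hQ hκ hκ'
  have hQne : ∀ᶠ s in 𝓝[≠] (0 : ℝ), Q s ≠ 0 := hQ.tendsto.eventually_ne one_ne_zero
  obtain ⟨r, ⟨c, hc⟩, he⟩ := hJ
  refine ⟨1 / (8 * π) * c.re, Tendsto.congr' ?_
    (((Complex.continuous_re.tendsto c).comp hc).const_mul (1 / (8 * π)))⟩
  filter_upwards [he, hQne, self_mem_nhdsWithin] with s hs hQs hs0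
  have hs0 : s ≠ 0 := hs0
  have hs0' : (s : ℂ) ≠ 0 := by exact_mod_cast hs0
  have hne : γ t ≠ γ (t + s) := by
    intro h
    apply hQs
    simp [Q, h]
  have hz : toC (γ t - γ (t + s)) = T * (-(s * Q s)) := by
    have h1 : toC (γ t - γ (t + s)) = toC (γ t) - toC (γ (t + s)) := by
      simp only [← toCL_apply, map_sub]
    rw [h1]
    have h2 : (s : ℂ) * Q s = cj T * (toC (γ (t + s)) - toC (γ t)) := by
      simp only [Q]; field_simp
    rw [h2]
    linear_combination (toC (γ (t + s)) - toC (γ t)) * hT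
  have hτ : toC (deriv γ (t + s)) = T * E s := by
    simp only [E]
    linear_combination (-toC (deriv γ (t + s))) * hT
  have hnor : ∀ u, toC (nor γ u) = -Complex.I * toC (deriv γ u) := by
    intro u
    apply Complex.ext <;> simp [toC, nor]
  have hEE : E s * cj (E s) = 1 := by
    have h := toC_norm (harc (t + s))
    simp only [E, map_mul, Complex.conj_conj]
    linear_combination T * cj T * h + hT
  have n1 : -toC (nor γ (t + s)) = T * (Complex.I * E s) := by
    rw [hnor, hτ]; ring
  have n2 : toC (nor γ t) = T * (-Complex.I) := by
    rw [hnor]; ring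
  have n3 : -toC (tang γ (t + s)) = T * (-E s) := by
    rw [tang, hτ]; ring
  have n4 : toC (tang γ t) = T * 1 := by
    rw [tang, mul_one]
  have hred := red_all hEE ν α₂ α₃ (curv γ (t + s)) ((deriv (curv γ) (t + s) : ℝ) : ℂ) s hs0 hQs
  rw [hs] at hred
  have hre := congrArg Complex.re hred
  unfold suppKer
  simp only [K5 _ _ _ _ _ _ hne, K4 _ _ _ _ _ hne, K3 _ _ _ _ hne, n1, n2, n3, n4, hz,
    C5_rot hT, C4_rot hT, C3_rot hT]
  have hright : (((0 : ℂ) + 0 * s + Complex.I * ((4 * (1 - ν ^ 2) * k ^ 2 + 4 * ν * α₂ * k ^ 2 : ℝ)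
      : ℂ) * s ^ 2 + r s * s ^ 3) * ((s : ℂ) ^ 3)⁻¹).re = (r s).re := by
    have : ((0 : ℂ) + 0 * s + Complex.I * ((4 * (1 - ν ^ 2) * k ^ 2 + 4 * ν * α₂ * k ^ 2 : ℝ)
      : ℂ) * s ^ 2 + r s * s ^ 3) * ((s : ℂ) ^ 3)⁻¹ = Complex.I *
      (((4 * (1 - ν ^ 2) * k ^ 2 + 4 * ν * α₂ * k ^ 2) * s⁻¹ : ℝ) : ℂ) + r s := by
      push_cast
      field_simp
      ring
    rw [this, Complex.add_re, Complex.re_mul_ofReal, Complex.I_re, zero_mul, zero_add]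
  rw [hright] at hre
  have e1 : ∀ (x : ℝ) (w : ℂ), ((x : ℂ) * w).re = x * w.re := fun x w => Complex.re_ofReal_mul x w
  have e2 : (2 - (ν : ℂ)) = ((2 - ν : ℝ) : ℂ) := by push_cast; ring
  rw [e2] at hre
  simp only [← Complex.ofReal_mul, Complex.add_re, e1] at hre
  simp only [Function.comp]
  rw [← hre, hα₁]
  ring
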